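/- For integers n and t with n ≥ 2t + 3 and t ≥ 2, D_R(G8) − D_R(G⁰(n,t)) = (10/3)n + (2/3)t − 62/3, where G8 is the cactus on n vertices consisting of t − 2 triangles, two quadrilaterals C4, and n − 2t − 3 pendent edges, all sharing a single common vertex v1. -/

import Mathlib

open Finset

/-- Effective resistance between two vertices of a graph (for a connected graph
this is the effective resistance when every edge is a unit resistor), defined via
the matrix-tree / spanning-two-forest determinant formula. -/
noncomputable def effRes {V : Type*} [Finite V] (G : SimpleGraph V) (u v : V) : ℝ :=
  letI := Fintype.ofFinite V
  letI := Classical.decEq V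
  letI : DecidableRel G.Adj := Classical.decRel _
  if u = v then 0
  else
    Matrix.det ((G.lapMatrix ℝ).submatrix
        (fun w : {w : V // w ≠ u ∧ w ≠ v} => (w : V)) (fun w => (w : V)))
      / Matrix.det ((G.lapMatrix ℝ).submatrix
        (fun w : {w : V // w ≠ u} => (w : V)) (fun w => (w : V)))

/-- The degree resistance distance `D_R(G) = Σ_{ {u,v} ⊆ V } (d(u)+d(v)) R(u,v)`. -/
noncomputable def degRes {V : Type*} [Finite V] (G : SimpleGraph V) : ℝ :=
  letI := Fintype.ofFinite V
  letI := Classical.decEq V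
  letI : DecidableRel G.Adj := Classical.decRel _
  (1 / 2) * ∑ u : V, ∑ v : V, ((G.degree u : ℝ) + (G.degree v : ℝ)) * effRes G u v

/-- The Kirchhoff index `Kf(G) = Σ_{ {u,v} ⊆ V } R(u,v)`. -/
noncomputable def kirchhoffIndex {V : Type*} [Finite V] (G : SimpleGraph V) : ℝ :=
  letI := Fintype.ofFinite V
  (1 / 2) * ∑ u : V, ∑ v : V, effRes G u v

/-- `Kf_v(G) = Σ_{u ∈ V} R(u,v)`. -/
noncomputable def Kfv {V : Type*} [Finite V] (G : SimpleGraph V) (v : V) : ℝ :=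
  letI := Fintype.ofFinite V
  ∑ u : V, effRes G u v

/-- `D_v(G) = Σ_{u ∈ V} d(u) R(u,v)`. -/
noncomputable def Dv {V : Type*} [Finite V] (G : SimpleGraph V) (v : V) : ℝ :=
  letI := Fintype.ofFinite V
  letI := Classical.decEq V
  letI : DecidableRel G.Adj := Classical.decRel _
  ∑ u : V, (G.degree u : ℝ) * effRes G u v

/-- A subgraph is a cycle if it is connected and `2`-regular. -/
def IsCycleSubgraph {V : Type*} {G : SimpleGraph V} (H : G.Subgraph) : Prop :=
  H.coe.Connected ∧ ∀ v ∈ H.verts, {u | H.Adj v u}.ncard = 2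

/-- A cactus is a connected graph in which any two distinct cycles share at most
one vertex (equivalently, every block is an edge or a cycle). -/
def IsCactus {V : Type*} (G : SimpleGraph V) : Prop :=
  G.Connected ∧ ∀ H₁ H₂ : G.Subgraph, IsCycleSubgraph H₁ → IsCycleSubgraph H₂ →
    H₁ ≠ H₂ → (H₁.verts ∩ H₂.verts).ncard ≤ 1

/-- The number of cycles of a graph. -/
noncomputable def numCycles {V : Type*} (G : SimpleGraph V) : ℕ :=
  {H : G.Subgraph | IsCycleSubgraph H}.ncard

/-- `G ∈ Cact(n;t)`: `G` is a cactus with `n` vertices and `t` cycles. -/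
def MemCact {V : Type*} (n t : ℕ) (G : SimpleGraph V) : Prop :=
  IsCactus G ∧ Nat.card V = n ∧ numCycles G = t

/-- `G⁰(n,t)`: `t` triangles (on vertices `2i+1, 2i+2`, `i < t`) and `n - 2t - 1`
pendent edges, all sharing the common vertex `0`. -/
def G0 (n t : ℕ) : SimpleGraph (Fin n) :=
  SimpleGraph.fromRel (fun a b =>
    a.val = 0 ∨ (Odd a.val ∧ b.val = a.val + 1 ∧ b.val ≤ 2 * t))

/-- `G3`: `t` triangles, `n - 2t - 3` pendent edges, and one pendent path of
length 2 (through `2t+1` to `2t+2`), all attached at the common vertex `0`. -/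
def G3g (n t : ℕ) : SimpleGraph (Fin n) :=
  SimpleGraph.fromRel (fun a b =>
    (a.val = 0 ∧ b.val ≠ 2 * t + 2) ∨
    (Odd a.val ∧ b.val = a.val + 1 ∧ b.val ≤ 2 * t) ∨
    (a.val = 2 * t + 1 ∧ b.val = 2 * t + 2))

/-- `G4`: `t` triangles and `n - 2t - 2` pendent edges at the common vertex `0`,
together with one pendent edge (to `2t+1`) attached at the triangle vertex `1`. -/
def G4g (n t : ℕ) : SimpleGraph (Fin n) :=
  SimpleGraph.fromRel (fun a b =>
    (a.val = 0 ∧ b.val ≠ 2 * t + 1) ∨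
    (Odd a.val ∧ b.val = a.val + 1 ∧ b.val ≤ 2 * t) ∨
    (a.val = 1 ∧ b.val = 2 * t + 1))

/-- `G5`: `t - 1` triangles, one quadrilateral `C₄` (on `0, 2t-1, 2t, 2t+1`), and
`n - 2t - 2` pendent edges, all sharing the common vertex `0`. -/
def G5g (n t : ℕ) : SimpleGraph (Fin n) :=
  SimpleGraph.fromRel (fun a b =>
    (a.val = 0 ∧ b.val ≠ 2 * t) ∨
    (Odd a.val ∧ b.val = a.val + 1 ∧ b.val ≤ 2 * t - 2) ∨
    (a.val = 2 * t - 1 ∧ b.val = 2 * t) ∨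
    (a.val = 2 * t ∧ b.val = 2 * t + 1))

/-- `G6`: `t - 1` triangles, one quadrilateral `C₄` (on `0, 2t-1, 2t, 2t+1`), and
`n - 2t - 3` pendent edges at the common vertex `0`, together with one pendent edge
(to `2t+2`) attached at the quadrilateral vertex `2t-1`, which is adjacent to `0`. -/
def G6g (n t : ℕ) : SimpleGraph (Fin n) :=
  SimpleGraph.fromRel (fun a b =>
    (a.val = 0 ∧ b.val ≠ 2 * t ∧ b.val ≠ 2 * t + 2) ∨
    (Odd a.val ∧ b.val = a.val + 1 ∧ b.val ≤ 2 * t - 2) ∨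
    (a.val = 2 * t - 1 ∧ (b.val = 2 * t ∨ b.val = 2 * t + 2)) ∨
    (a.val = 2 * t ∧ b.val = 2 * t + 1))

/-- `G7`: `t - 1` triangles, one quadrilateral `C₄` (on `0, 2t-1, 2t, 2t+1`), and
`n - 2t - 3` pendent edges at the common vertex `0`, together with one pendent edge
(to `2t+2`) attached at the quadrilateral vertex `2t`, which is opposite to `0`. -/
def G7g (n t : ℕ) : SimpleGraph (Fin n) :=
  SimpleGraph.fromRel (fun a b =>
    (a.val = 0 ∧ b.val ≠ 2 * t ∧ b.val ≠ 2 * t + 2) ∨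
    (Odd a.val ∧ b.val = a.val + 1 ∧ b.val ≤ 2 * t - 2) ∨
    (a.val = 2 * t - 1 ∧ b.val = 2 * t) ∨
    (a.val = 2 * t ∧ (b.val = 2 * t + 1 ∨ b.val = 2 * t + 2)))

/-- `G8`: `t - 2` triangles, two quadrilaterals `C₄` (on `0, 2t-3, 2t-2, 2t-1` and
on `0, 2t, 2t+1, 2t+2`), and `n - 2t - 3` pendent edges, all sharing the common
vertex `0`. -/
def G8g (n t : ℕ) : SimpleGraph (Fin n) :=
  SimpleGraph.fromRel (fun a b =>
    (a.val = 0 ∧ b.val ≠ 2 * t - 2 ∧ b.val ≠ 2 * t + 1) ∨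
    (Odd a.val ∧ b.val = a.val + 1 ∧ b.val ≤ 2 * t - 4) ∨
    (a.val = 2 * t - 3 ∧ b.val = 2 * t - 2) ∨
    (a.val = 2 * t - 2 ∧ b.val = 2 * t - 1) ∨
    (a.val = 2 * t ∧ b.val = 2 * t + 1) ∨
    (a.val = 2 * t + 1 ∧ b.val = 2 * t + 2))

/-- `G9`: `t - 1` triangles, one quadrilateral `C₄` (on `0, 2t-1, 2t, 2t+1`), and
`n - 2t - 3` pendent edges at the common vertex `0`, together with one pendent edge
(to `2t+2`) attached at the non-central triangle vertex `1`. -/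
def G9g (n t : ℕ) : SimpleGraph (Fin n) :=
  SimpleGraph.fromRel (fun a b =>
    (a.val = 0 ∧ b.val ≠ 2 * t ∧ b.val ≠ 2 * t + 2) ∨
    (Odd a.val ∧ b.val = a.val + 1 ∧ b.val ≤ 2 * t - 2) ∨
    (a.val = 2 * t - 1 ∧ b.val = 2 * t) ∨
    (a.val = 2 * t ∧ b.val = 2 * t + 1) ∨
    (a.val = 1 ∧ b.val = 2 * t + 2))

/-- `G10`: `t - 1` triangles, one pentagon `C₅` (on `0, 2t-1, 2t, 2t+1, 2t+2`), and
`n - 2t - 3` pendent edges, all sharing the common vertex `0`. -/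
def G10g (n t : ℕ) : SimpleGraph (Fin n) :=
  SimpleGraph.fromRel (fun a b =>
    (a.val = 0 ∧ b.val ≠ 2 * t ∧ b.val ≠ 2 * t + 1) ∨
    (Odd a.val ∧ b.val = a.val + 1 ∧ b.val ≤ 2 * t - 2) ∨
    (a.val = 2 * t - 1 ∧ b.val = 2 * t) ∨
    (a.val = 2 * t ∧ b.val = 2 * t + 1) ∨
    (a.val = 2 * t + 1 ∧ b.val = 2 * t + 2))

/-!
Let `G` be the union of `G₁` and `G₂` with the vertex `v₁` of `G₁` glued to the vertex `v₂` of
`G₂`. Unit potentials on the two parts, shifted to agree at the gluing vertex, glue to potentials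
on `G`, so resistances inside a part are unchanged and resistances across add up. Summation gives
`D_R(G) = D_R(G₁) + D_R(G₂) + (|V₂| - 1) D_{v₁}(G₁) + (|V₁| - 1) D_{v₂}(G₂) +
2 |E₁| Kf_{v₂}(G₂) + 2 |E₂| Kf_{v₁}(G₁)`.

The quadrilateral and `G⁰(4,1)`, a triangle with a pendent edge, both have four vertices and four
edges. Hence replacing a copy of the second in a one-point union by the first changes `D_R` by an
amount that depends only on the orders and sizes involved, namely `(4 |V| + |E|) / 3 - 10`. Two
such replacements lead from `G⁰(n,t)` through `G5` to `G8`; both have `|V| = n` and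
`|E| = n + t - 1`.
-/

open Matrix

section EffectiveResistance

theorem adjugate_apply_self_eq_det_submatrix {n R : Type*} [Fintype n] [DecidableEq n]
    [CommRing R] (A : Matrix n n R) (i : n) :
    A.adjugate i i = (A.submatrix ((↑) : {j // j ≠ i} → n) (↑)).det := by
  rw [adjugate_apply, twoBlockTriangular_det' _ (· = i)]
  · refine (congrArg₂ (· * ·) (det_toSquareBlock_id _ i) rfl).trans ?_
    rw [updateRow_self, Pi.single_eq_same, one_mul]
    congr 1
    ext k l
    exact congrFun (updateRow_ne k.2) _
  · rintro k rfl l hl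
    simp [Pi.single_eq_of_ne hl]

variable {V : Type*} [Fintype V] [DecidableEq V] {G : SimpleGraph V} [DecidableRel G.Adj]
  {u v : V} {x y : V → ℝ}

variable (G) in
/-- The Laplacian of `G` with the row and column of the grounded vertex `u` deleted. -/
def groundedLaplacian (u : V) : Matrix {w // w ≠ u} {w // w ≠ u} ℝ :=
  (G.lapMatrix ℝ).submatrix (↑) (↑)

theorem effRes_eq_adjugate_div_det (h : v ≠ u) :
    effRes G u v =
      (groundedLaplacian G u).adjugate ⟨v, h⟩ ⟨v, h⟩ / (groundedLaplacian G u).det := by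
  let e : {w : {w // w ≠ u} // w ≠ ⟨v, h⟩} ≃ {w // w ≠ u ∧ w ≠ v} :=
    (Equiv.subtypeEquivRight fun w ↦ by simp [Subtype.ext_iff]).trans
      (Equiv.subtypeSubtypeEquivSubtypeInter (· ≠ u) (· ≠ v))
  rw [adjugate_apply_self_eq_det_submatrix]
  trans ((G.lapMatrix ℝ).submatrix ((↑) : {w // w ≠ u ∧ w ≠ v} → V) (↑)).det /
    (groundedLaplacian G u).det
  · simp only [effRes, if_neg h.symm, groundedLaplacian]
    congr!
  · rw [← det_submatrix_equiv_self e]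
    rfl

theorem groundedLaplacian_mulVec (hx : x u = 0) (w : {w // w ≠ u}) :
    (groundedLaplacian G u *ᵥ fun z ↦ x z) w = (G.lapMatrix ℝ *ᵥ x) w := by
  simp only [mulVec, dotProduct, groundedLaplacian, submatrix_apply]
  rw [← Fintype.sum_subtype_add_sum_subtype (· ≠ u), left_eq_add]
  exact Finset.sum_eq_zero fun z _ ↦ by simp [not_not.mp z.2, hx]

theorem sum_lapMatrix_mulVec (x : V → ℝ) : ∑ w, (G.lapMatrix ℝ *ᵥ x) w = 0 := by
  rw [← one_dotProduct, dotProduct_mulVec, ← mulVec_transpose, (G.isSymm_lapMatrix (R := ℝ)).eq,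
    Pi.one_def, G.lapMatrix_mulVec_const_eq_zero, zero_dotProduct]

theorem lapMatrix_mulVec_eq_of_forall_ne {c : V → ℝ} (hc : ∑ w, c w = 0)
    (h : ∀ w, w ≠ u → (G.lapMatrix ℝ *ᵥ x) w = c w) : G.lapMatrix ℝ *ᵥ x = c := by
  funext w
  by_cases hw : w = u
  · have hsum : ∑ w ∈ univ.erase u, (G.lapMatrix ℝ *ᵥ x) w = ∑ w ∈ univ.erase u, c w :=
      Finset.sum_congr rfl fun w hw ↦ h w (Finset.ne_of_mem_erase hw)
    have hL := sum_lapMatrix_mulVec (G := G) x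
    rw [← Finset.add_sum_erase _ _ (mem_univ u)] at hc hL
    rw [hw]
    linarith
  · exact h w hw

theorem det_groundedLaplacian_ne_zero (hG : G.Connected) (u : V) :
    (groundedLaplacian G u).det ≠ 0 := by
  intro hdet
  obtain ⟨z, hz, hLz⟩ := exists_mulVec_eq_zero_iff.mpr hdet
  let y : V → ℝ := fun w ↦ if hw : w ≠ u then z ⟨w, hw⟩ else 0
  have hyu : y u = 0 := by simp [y]
  have hyz : (fun w : {w // w ≠ u} ↦ y w) = z := by
    ext w
    simp [y, w.2]
  have hLy : G.lapMatrix ℝ *ᵥ y = 0 := lapMatrix_mulVec_eq_of_forall_ne (u := u) (by simp)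
    fun w hw ↦ by rw [← groundedLaplacian_mulVec hyu ⟨w, hw⟩, hyz, hLz]; rfl
  refine hz (funext fun w ↦ ?_)
  rw [← hyz]
  simpa [hyu] using
    G.lapMatrix_mulVec_eq_zero_iff_forall_reachable.mp hLy w u (hG.preconnected w u)

variable (G u v x) in
/-- `x` is a voltage on `G` driving a unit current through the network between `u` and `v`. The
sign is such that `v` is at the higher voltage. -/
def IsUnitPotential : Prop :=
  G.lapMatrix ℝ *ᵥ x = Pi.single v 1 - Pi.single u 1

theorem exists_isUnitPotential_sub_eq_effRes (hG : G.Connected) (u v : V) :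
    ∃ x, IsUnitPotential G u v x ∧ x v - x u = effRes G u v := by
  rcases eq_or_ne v u with rfl | h
  · exact ⟨0, by simp [IsUnitPotential], by simp [effRes]⟩
  set M := groundedLaplacian G u
  have hM : IsUnit M.det := (det_groundedLaplacian_ne_zero hG u).isUnit
  let x : V → ℝ := fun w ↦ if hw : w ≠ u then M⁻¹ ⟨w, hw⟩ ⟨v, h⟩ else 0
  have hxu : x u = 0 := by simp [x]
  have hMx : M *ᵥ (fun w ↦ x w) = Pi.single ⟨v, h⟩ 1 := by
    have hcol : (fun w : {w // w ≠ u} ↦ x w) = M⁻¹ *ᵥ Pi.single ⟨v, h⟩ 1 := by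
      ext w
      simp [x, w.2]
    rw [hcol, mulVec_mulVec, mul_nonsing_inv _ hM, one_mulVec]
  refine ⟨x, lapMatrix_mulVec_eq_of_forall_ne (u := u) (by simp) fun w hw ↦ ?_, ?_⟩
  · rw [← groundedLaplacian_mulVec hxu ⟨w, hw⟩, hMx]
    simp [Pi.single_apply, hw]
  · rw [effRes_eq_adjugate_div_det h, hxu, sub_zero]
    simp [x, h, Matrix.inv_def, div_eq_inv_mul, M]

theorem IsUnitPotential.effRes_eq (hx : IsUnitPotential G u v x) (hG : G.Connected) :
    effRes G u v = x v - x u := by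
  obtain ⟨y, hy, hyR⟩ := exists_isUnitPotential_sub_eq_effRes hG u v
  have hL : G.lapMatrix ℝ *ᵥ (x - y) = 0 := by rw [mulVec_sub, hx, hy, sub_self]
  have hxy := G.lapMatrix_mulVec_eq_zero_iff_forall_reachable.mp hL u v (hG.preconnected u v)
  simp only [Pi.sub_apply] at hxy
  linarith

theorem effRes_eq_of_forall_isUnitPotential {o : V} {Γ : Matrix V V ℝ} (hG : G.Connected)
    (hΓ : ∀ v, IsUnitPotential G o v (Γ.col v)) (u v : V) :
    effRes G u v = Γ u u + Γ v v - Γ u v - Γ v u := by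
  have hx : IsUnitPotential G u v (Γ.col v - Γ.col u) := by
    rw [IsUnitPotential, mulVec_sub, hΓ v, hΓ u, sub_sub_sub_cancel_right]
  rw [hx.effRes_eq hG]
  simp only [Pi.sub_apply, col_apply]
  ring

theorem exists_isUnitPotential (hG : G.Connected) (u v : V) : ∃ x, IsUnitPotential G u v x :=
  (exists_isUnitPotential_sub_eq_effRes hG u v).imp fun _ h ↦ h.1

theorem IsUnitPotential.neg (hx : IsUnitPotential G u v x) : IsUnitPotential G v u (-x) := by
  rw [IsUnitPotential, mulVec_neg, hx, neg_sub]

theorem lapMatrix_apply (u v : V) :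
    G.lapMatrix ℝ u v = if u = v then (G.degree u : ℝ) else if G.Adj u v then -1 else 0 := by
  rcases eq_or_ne u v with rfl | h
  · simp [SimpleGraph.lapMatrix, SimpleGraph.degMatrix]
  · simp [SimpleGraph.lapMatrix, SimpleGraph.degMatrix, h, apply_ite]

theorem dotProduct_lapMatrix_mulVec_eq_sum (G : SimpleGraph V) [DecidableRel G.Adj]
    (φ x : V → ℝ) :
    φ ⬝ᵥ (G.lapMatrix ℝ *ᵥ x) = ∑ u, ∑ v ∈ G.neighborFinset u, φ u * (x u - x v) := by
  simp only [dotProduct, SimpleGraph.lapMatrix_mulVec_apply, mul_sub, sum_sub_distrib, sum_const,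
    SimpleGraph.card_neighborFinset_eq_degree, nsmul_eq_mul, mul_sum, mul_left_comm]

theorem isUnitPotential_iff_forall_dotProduct :
    IsUnitPotential G u v x ↔ ∀ φ : V → ℝ, φ ⬝ᵥ (G.lapMatrix ℝ *ᵥ x) = φ v - φ u := by
  refine ⟨fun hx φ ↦ ?_, fun h ↦ ?_⟩
  · rw [hx, dotProduct_sub, dotProduct_single_one, dotProduct_single_one]
  · refine dotProduct_eq _ _ fun φ ↦ ?_
    rw [dotProduct_comm, h, sub_dotProduct, single_one_dotProduct, single_one_dotProduct]

theorem IsUnitPotential.add_const (hx : IsUnitPotential G u v x) (c : ℝ) :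
    IsUnitPotential G u v fun w ↦ x w + c := by
  have hc : G.lapMatrix ℝ *ᵥ (fun _ ↦ c) = 0 :=
    G.lapMatrix_mulVec_eq_zero_iff_forall_adj.mpr fun _ _ _ ↦ rfl
  rw [IsUnitPotential, ← hx, ← add_zero (G.lapMatrix ℝ *ᵥ x), ← hc, ← mulVec_add]
  rfl

end EffectiveResistance

section DegreeResistance

variable {V : Type*}

theorem effRes_comm [Finite V] {G : SimpleGraph V} (hG : G.Connected) (u v : V) :
    effRes G u v = effRes G v u := by
  classical
  cases nonempty_fintype V
  obtain ⟨x, hx⟩ := exists_isUnitPotential hG u v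
  rw [hx.effRes_eq hG, hx.neg.effRes_eq hG, Pi.neg_apply, Pi.neg_apply]
  ring

variable [Fintype V]

theorem Kfv_eq_sum (G : SimpleGraph V) (v : V) : Kfv G v = ∑ u, effRes G u v := by
  unfold Kfv
  congr!

theorem Dv_eq_sum (G : SimpleGraph V) [DecidableRel G.Adj] (v : V) :
    Dv G v = ∑ u, (G.degree u : ℝ) * effRes G u v := by
  unfold Dv
  congr!

theorem degRes_eq_sum_degree_mul_Kfv {G : SimpleGraph V} [DecidableRel G.Adj]
    (hG : G.Connected) : degRes G = ∑ u, (G.degree u : ℝ) * Kfv G u := by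
  have hdef : degRes G = 1 / 2 * ∑ u, ∑ v, ((G.degree u : ℝ) + G.degree v) * effRes G u v := by
    unfold degRes
    congr!
  have hsymm : ∑ u, ∑ v, (G.degree u : ℝ) * effRes G u v =
      ∑ u, ∑ v, (G.degree v : ℝ) * effRes G u v := by
    rw [Finset.sum_comm]
    simp only [effRes_comm hG]
  calc
    degRes G = ∑ u, ∑ v, (G.degree v : ℝ) * effRes G u v := by
      simp only [hdef, add_mul, Finset.sum_add_distrib, hsymm]
      ring
    _ = ∑ u, (G.degree u : ℝ) * Kfv G u := by
      rw [Finset.sum_comm]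
      simp only [Kfv_eq_sum, Finset.mul_sum]

theorem sum_degree_eq_two_mul_ncard_edgeSet (G : SimpleGraph V) [DecidableRel G.Adj] :
    ∑ v, (G.degree v : ℝ) = 2 * G.edgeSet.ncard := by
  classical
  rw [← G.coe_edgeFinset, Set.ncard_coe_finset]
  exact_mod_cast G.sum_degrees_eq_twice_card_edges

end DegreeResistance

theorem sum_neighborFinset_eq_sum_filter_adj {V : Type*} [Fintype V] (G : SimpleGraph V)
    [DecidableRel G.Adj] (F : V → V → ℝ) :
    ∑ u, ∑ v ∈ G.neighborFinset u, F u v = ∑ p : V × V with G.Adj p.1 p.2, F p.1 p.2 := by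
  rw [sum_filter, Fintype.sum_prod_type]
  simp only [← sum_filter, SimpleGraph.neighborFinset_eq_filter]

section OnePointUnion

variable {V V₁ V₂ : Type*}

/-- `G` is the union of copies of `G₁` and `G₂`, embedded by `f` and `g`, that share exactly the
vertex `f v₁ = g v₂` and are not joined by any further edge. -/
structure IsOnePointUnion (G₁ : SimpleGraph V₁) (v₁ : V₁) (G₂ : SimpleGraph V₂) (v₂ : V₂)
    (G : SimpleGraph V) (f : V₁ ↪ V) (g : V₂ ↪ V) : Prop where
  adj_left : ∀ x x', G.Adj (f x) (f x') ↔ G₁.Adj x x'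
  adj_right : ∀ y y', G.Adj (g y) (g y') ↔ G₂.Adj y y'
  apply_eq_apply : ∀ x y, f x = g y ↔ x = v₁ ∧ y = v₂
  exists_apply_eq : ∀ v, (∃ x, f x = v) ∨ ∃ y, g y = v
  eq_or_eq_of_adj : ∀ x y, G.Adj (f x) (g y) → x = v₁ ∨ y = v₂

namespace IsOnePointUnion

variable {G₁ : SimpleGraph V₁} {v₁ : V₁} {G₂ : SimpleGraph V₂} {v₂ : V₂} {G : SimpleGraph V}
  {f : V₁ ↪ V} {g : V₂ ↪ V}

theorem symm (h : IsOnePointUnion G₁ v₁ G₂ v₂ G f g) : IsOnePointUnion G₂ v₂ G₁ v₁ G g f where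
  adj_left := h.adj_right
  adj_right := h.adj_left
  apply_eq_apply y x := by rw [eq_comm, h.apply_eq_apply, and_comm]
  exists_apply_eq v := (h.exists_apply_eq v).symm
  eq_or_eq_of_adj y x hyx := (h.eq_or_eq_of_adj x y hyx.symm).symm

theorem apply_root (h : IsOnePointUnion G₁ v₁ G₂ v₂ G f g) : f v₁ = g v₂ :=
  (h.apply_eq_apply v₁ v₂).mpr ⟨rfl, rfl⟩

theorem connected (h : IsOnePointUnion G₁ v₁ G₂ v₂ G f g) (h₁ : G₁.Connected)
    (h₂ : G₂.Connected) : G.Connected := by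
  let F : G₁ →g G := ⟨f, (h.adj_left _ _).mpr⟩
  let F' : G₂ →g G := ⟨g, (h.adj_right _ _).mpr⟩
  refine SimpleGraph.connected_iff_exists_forall_reachable _ |>.mpr ⟨f v₁, fun v ↦ ?_⟩
  obtain ⟨x, rfl⟩ | ⟨y, rfl⟩ := h.exists_apply_eq v
  · exact (h₁.preconnected v₁ x).map F
  · rw [h.apply_root]
    exact (h₂.preconnected v₂ y).map F'

theorem exists_comp_eq (h : IsOnePointUnion G₁ v₁ G₂ v₂ G f g) {x₁ : V₁ → ℝ} {x₂ : V₂ → ℝ}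
    (hx : x₁ v₁ = x₂ v₂) : ∃ x : V → ℝ, x ∘ f = x₁ ∧ x ∘ g = x₂ := by
  refine ⟨Function.extend f x₁ (Function.extend g x₂ 0),
    funext fun a ↦ f.injective.extend_apply _ _ _, funext fun b ↦ ?_⟩
  by_cases hb : ∃ a, f a = g b
  · obtain ⟨a, ha⟩ := hb
    obtain ⟨rfl, rfl⟩ := (h.apply_eq_apply a b).mp ha
    rw [Function.comp_apply, ← ha, f.injective.extend_apply, hx]
  · rw [Function.comp_apply, Function.extend_apply' _ _ _ hb, g.injective.extend_apply]

theorem exists_adj_of_adj_left (h : IsOnePointUnion G₁ v₁ G₂ v₂ G f g) {x : V₁} {v : V}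
    (hxv : G.Adj (f x) v) :
    (∃ a a', G₁.Adj a a' ∧ f a = f x ∧ f a' = v) ∨ ∃ b b', G₂.Adj b b' ∧ g b = f x ∧ g b' = v := by
  obtain ⟨x', rfl⟩ | ⟨y, rfl⟩ := h.exists_apply_eq v
  · exact .inl ⟨x, x', (h.adj_left x x').mp hxv, rfl, rfl⟩
  · obtain rfl | rfl := h.eq_or_eq_of_adj x y hxv
    · rw [h.apply_root] at hxv ⊢
      exact .inr ⟨v₂, y, (h.adj_right v₂ y).mp hxv, rfl, rfl⟩
    · rw [← h.apply_root] at hxv ⊢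
      exact .inl ⟨x, v₁, (h.adj_left x v₁).mp hxv, rfl, rfl⟩

theorem exists_adj_of_adj (h : IsOnePointUnion G₁ v₁ G₂ v₂ G f g) {u v : V} (huv : G.Adj u v) :
    (∃ a a', G₁.Adj a a' ∧ f a = u ∧ f a' = v) ∨ ∃ b b', G₂.Adj b b' ∧ g b = u ∧ g b' = v := by
  obtain ⟨x, rfl⟩ | ⟨y, rfl⟩ := h.exists_apply_eq u
  · exact h.exists_adj_of_adj_left huv
  · exact (h.symm.exists_adj_of_adj_left huv).symm

section Fintype

variable [Fintype V] [Fintype V₁] [Fintype V₂]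

theorem sum_eq (h : IsOnePointUnion G₁ v₁ G₂ v₂ G f g) (φ : V → ℝ) :
    ∑ v, φ v = ∑ x, φ (f x) + ∑ y, φ (g y) - φ (f v₁) := by
  classical
  have hunion : (univ : Finset V) = univ.map f ∪ univ.map g := by
    ext v
    simpa using h.exists_apply_eq v
  have hinter : univ.map f ∩ univ.map g = {f v₁} := by
    ext v
    simp only [mem_inter, mem_map, mem_univ, true_and, mem_singleton]
    constructor
    · rintro ⟨⟨x, rfl⟩, y, hy⟩
      rw [((h.apply_eq_apply x y).mp hy.symm).1]
    · rintro rfl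
      exact ⟨⟨v₁, rfl⟩, v₂, h.apply_root.symm⟩
  have hsum := Finset.sum_union_inter (s₁ := univ.map f) (s₂ := univ.map g) (f := φ)
  rw [← hunion, hinter, sum_singleton, sum_map, sum_map] at hsum
  linarith

theorem card_add_one (h : IsOnePointUnion G₁ v₁ G₂ v₂ G f g) :
    Fintype.card V + 1 = Fintype.card V₁ + Fintype.card V₂ := by
  have hcard := h.sum_eq fun _ ↦ 1
  simp only [sum_const, card_univ, nsmul_one] at hcard
  exact_mod_cast eq_sub_iff_add_eq.mp hcard

variable [DecidableRel G.Adj] [DecidableRel G₁.Adj] [DecidableRel G₂.Adj]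

theorem sum_neighborFinset_eq (h : IsOnePointUnion G₁ v₁ G₂ v₂ G f g) (F : V → V → ℝ) :
    ∑ u, ∑ v ∈ G.neighborFinset u, F u v =
      ∑ x, ∑ x' ∈ G₁.neighborFinset x, F (f x) (f x') +
        ∑ y, ∑ y' ∈ G₂.neighborFinset y, F (g y) (g y') := by
  classical
  have hunion : univ.filter (fun p : V × V ↦ G.Adj p.1 p.2) =
      (univ.filter fun p : V₁ × V₁ ↦ G₁.Adj p.1 p.2).map (f.prodMap f) ∪
        (univ.filter fun p : V₂ × V₂ ↦ G₂.Adj p.1 p.2).map (g.prodMap g) := by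
    ext ⟨u, v⟩
    simp only [mem_filter_univ, mem_union, mem_map, Prod.exists, Prod.mk.injEq,
      Function.Embedding.coe_prodMap, Prod.map_apply]
    refine ⟨h.exists_adj_of_adj, ?_⟩
    rintro (⟨x, x', hx, rfl, rfl⟩ | ⟨y, y', hy, rfl, rfl⟩)
    exacts [(h.adj_left x x').mpr hx, (h.adj_right y y').mpr hy]
  have hdisj : Disjoint
      ((univ.filter fun p : V₁ × V₁ ↦ G₁.Adj p.1 p.2).map (f.prodMap f))
      ((univ.filter fun p : V₂ × V₂ ↦ G₂.Adj p.1 p.2).map (g.prodMap g)) := by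
    simp only [Finset.disjoint_left, mem_map, mem_filter_univ]
    rintro _ ⟨⟨x, x'⟩, hx, rfl⟩ ⟨⟨y, y'⟩, _, hxy⟩
    obtain ⟨hx₁, hx₂⟩ := Prod.ext_iff.mp hxy
    exact hx.ne (((h.apply_eq_apply x y).mp hx₁.symm).1.trans
      ((h.apply_eq_apply x' y').mp hx₂.symm).1.symm)
  simp only [sum_neighborFinset_eq_sum_filter_adj, hunion, sum_union hdisj, sum_map,
    Function.Embedding.coe_prodMap, Prod.map_fst, Prod.map_snd]

theorem sum_degree_mul_eq (h : IsOnePointUnion G₁ v₁ G₂ v₂ G f g) (φ : V → ℝ) :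
    ∑ v, G.degree v * φ v =
      ∑ x, G₁.degree x * φ (f x) + ∑ y, G₂.degree y * φ (g y) := by
  simpa using h.sum_neighborFinset_eq fun u _ ↦ φ u

theorem dotProduct_lapMatrix_mulVec (h : IsOnePointUnion G₁ v₁ G₂ v₂ G f g) [DecidableEq V]
    [DecidableEq V₁] [DecidableEq V₂] (φ x : V → ℝ) :
    φ ⬝ᵥ (G.lapMatrix ℝ *ᵥ x) =
      (φ ∘ f) ⬝ᵥ (G₁.lapMatrix ℝ *ᵥ (x ∘ f)) + (φ ∘ g) ⬝ᵥ (G₂.lapMatrix ℝ *ᵥ (x ∘ g)) := by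
  simp only [dotProduct_lapMatrix_mulVec_eq_sum]
  exact h.sum_neighborFinset_eq fun u v ↦ φ u * (x u - x v)

end Fintype

theorem effRes_left [Finite V] [Finite V₁] (h : IsOnePointUnion G₁ v₁ G₂ v₂ G f g)
    (h₁ : G₁.Connected) (h₂ : G₂.Connected) (a a' : V₁) :
    effRes G (f a) (f a') = effRes G₁ a a' := by
  classical
  have : Finite V₂ := .of_injective g g.injective
  cases nonempty_fintype V
  cases nonempty_fintype V₁
  cases nonempty_fintype V₂
  obtain ⟨x₁, hx₁⟩ := exists_isUnitPotential h₁ a a'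
  obtain ⟨x, rfl, hxg⟩ := h.exists_comp_eq (x₁ := x₁) (x₂ := fun _ ↦ x₁ v₁) rfl
  have hg : G₂.lapMatrix ℝ *ᵥ (x ∘ g) = 0 :=
    G₂.lapMatrix_mulVec_eq_zero_iff_forall_adj.mpr fun _ _ _ ↦ by rw [hxg]
  have hx : IsUnitPotential G (f a) (f a') x := isUnitPotential_iff_forall_dotProduct.mpr fun φ ↦ by
    rw [h.dotProduct_lapMatrix_mulVec, hg, dotProduct_zero, add_zero,
      isUnitPotential_iff_forall_dotProduct.mp hx₁]
    rfl
  rw [hx.effRes_eq (h.connected h₁ h₂), hx₁.effRes_eq h₁]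
  rfl

theorem effRes_cross [Finite V] [Finite V₁] [Finite V₂]
    (h : IsOnePointUnion G₁ v₁ G₂ v₂ G f g) (h₁ : G₁.Connected) (h₂ : G₂.Connected) (a : V₁)
    (b : V₂) : effRes G (f a) (g b) = effRes G₁ a v₁ + effRes G₂ v₂ b := by
  classical
  cases nonempty_fintype V
  cases nonempty_fintype V₁
  cases nonempty_fintype V₂
  obtain ⟨x₁, hx₁⟩ := exists_isUnitPotential h₁ a v₁
  obtain ⟨x₂, hx₂⟩ := exists_isUnitPotential h₂ v₂ b
  replace hx₂ := hx₂.add_const (x₁ v₁ - x₂ v₂)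
  obtain ⟨x, rfl, hxg⟩ := h.exists_comp_eq (x₁ := x₁)
    (x₂ := fun w ↦ x₂ w + (x₁ v₁ - x₂ v₂)) (by ring)
  rw [← hxg] at hx₂
  have hx : IsUnitPotential G (f a) (g b) x := isUnitPotential_iff_forall_dotProduct.mpr fun φ ↦ by
    rw [h.dotProduct_lapMatrix_mulVec, isUnitPotential_iff_forall_dotProduct.mp hx₁,
      isUnitPotential_iff_forall_dotProduct.mp hx₂]
    simp only [Function.comp_apply, h.apply_root]
    ring
  rw [hx.effRes_eq (h.connected h₁ h₂), hx₁.effRes_eq h₁, hx₂.effRes_eq h₂]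
  simp only [Function.comp_apply, h.apply_root]
  ring

theorem Kfv_left [Finite V] [Finite V₁] [Fintype V₂] (h : IsOnePointUnion G₁ v₁ G₂ v₂ G f g)
    (h₁ : G₁.Connected) (h₂ : G₂.Connected) (a : V₁) :
    Kfv G (f a) = Kfv G₁ a + Kfv G₂ v₂ + (Fintype.card V₂ - 1) * effRes G₁ a v₁ := by
  cases nonempty_fintype V
  cases nonempty_fintype V₁
  have hcross (y : V₂) : effRes G (g y) (f a) = effRes G₂ y v₂ + effRes G₁ a v₁ := by
    rw [effRes_comm (h.connected h₁ h₂), h.effRes_cross h₁ h₂, effRes_comm h₂, add_comm]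
  simp only [Kfv_eq_sum, h.sum_eq, h.effRes_left h₁ h₂, hcross, effRes_comm h₁ v₁, sum_add_distrib,
    sum_const, card_univ, nsmul_eq_mul]
  ring

theorem degRes_eq [Finite V] [Fintype V₁] [Fintype V₂] (h : IsOnePointUnion G₁ v₁ G₂ v₂ G f g)
    (h₁ : G₁.Connected) (h₂ : G₂.Connected) :
    degRes G = degRes G₁ + degRes G₂ +
      (Fintype.card V₂ - 1) * Dv G₁ v₁ + (Fintype.card V₁ - 1) * Dv G₂ v₂ +
      2 * G₁.edgeSet.ncard * Kfv G₂ v₂ + 2 * G₂.edgeSet.ncard * Kfv G₁ v₁ := by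
  classical
  cases nonempty_fintype V
  rw [degRes_eq_sum_degree_mul_Kfv (h.connected h₁ h₂), h.sum_degree_mul_eq]
  simp only [h.Kfv_left h₁ h₂, h.symm.Kfv_left h₂ h₁, mul_add, sum_add_distrib, ← sum_mul,
    mul_left_comm _ (_ - 1 : ℝ), ← mul_sum, degRes_eq_sum_degree_mul_Kfv h₁,
    degRes_eq_sum_degree_mul_Kfv h₂, Dv_eq_sum, sum_degree_eq_two_mul_ncard_edgeSet]
  ring

theorem ncard_edgeSet [Finite V] (h : IsOnePointUnion G₁ v₁ G₂ v₂ G f g) :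
    G.edgeSet.ncard = G₁.edgeSet.ncard + G₂.edgeSet.ncard := by
  classical
  have : Finite V₁ := .of_injective f f.injective
  have : Finite V₂ := .of_injective g g.injective
  cases nonempty_fintype V
  cases nonempty_fintype V₁
  cases nonempty_fintype V₂
  have hdeg := h.sum_degree_mul_eq fun _ ↦ 1
  simp only [mul_one, sum_degree_eq_two_mul_ncard_edgeSet, ← mul_add] at hdeg
  exact_mod_cast mul_left_cancel₀ two_ne_zero hdeg

end IsOnePointUnion

end OnePointUnion

section G0

theorem adj_G0 {n t : ℕ} {a b : Fin n} : (G0 n t).Adj a b ↔ a ≠ b ∧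
    ((a.val = 0 ∨ Odd a.val ∧ b.val = a.val + 1 ∧ b.val ≤ 2 * t) ∨
      (b.val = 0 ∨ Odd b.val ∧ a.val = b.val + 1 ∧ a.val ≤ 2 * t)) :=
  Iff.rfl

theorem connected_G0 (n t : ℕ) [NeZero n] : (G0 n t).Connected :=
  .of_isUniversal (v := 0) fun _ h ↦ adj_G0.mpr ⟨h, .inl (.inl rfl)⟩

instance (n t : ℕ) : DecidableRel (G0 n t).Adj := fun _ _ ↦ decidable_of_iff' _ adj_G0

end G0

section FourVertices

theorem effRes_cycleGraph_four (u v : Fin 4) :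
    effRes (SimpleGraph.cycleGraph 4) u v =
      !![0, 3/4, 1, 3/4; 3/4, 0, 3/4, 1; 1, 3/4, 0, 3/4; 3/4, 1, 3/4, 0] u v := by
  have hL : (SimpleGraph.cycleGraph 4).lapMatrix ℝ =
      !![2, -1, 0, -1; -1, 2, -1, 0; 0, -1, 2, -1; -1, 0, -1, 2] := by
    ext i j
    rw [lapMatrix_apply, SimpleGraph.cycleGraph_degree_three_le]
    fin_cases i <;> fin_cases j <;> simp +decide
  let Γ : Matrix (Fin 4) (Fin 4) ℝ :=
    !![0, 0, 0, 0; 0, 3/4, 1/2, 1/4; 0, 1/2, 1, 1/2; 0, 1/4, 1/2, 3/4]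
  have hΓ (v : Fin 4) : IsUnitPotential (SimpleGraph.cycleGraph 4) 0 v (Γ.col v) := by
    rw [IsUnitPotential, hL]
    ext w
    fin_cases v <;> fin_cases w <;> simp [Γ, mulVec, dotProduct, Fin.sum_univ_four] <;> norm_num
  rw [effRes_eq_of_forall_isUnitPotential SimpleGraph.cycleGraph_connected hΓ]
  fin_cases u <;> fin_cases v <;> simp [Γ] <;> norm_num

theorem degree_G0_four_one (u : Fin 4) : (G0 4 1).degree u = ![3, 2, 2, 1] u := by
  decide +revert

theorem effRes_G0_four_one (u v : Fin 4) :
    effRes (G0 4 1) u v =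
      !![0, 2/3, 2/3, 1; 2/3, 0, 2/3, 5/3; 2/3, 2/3, 0, 5/3; 1, 5/3, 5/3, 0] u v := by
  have hL : (G0 4 1).lapMatrix ℝ =
      !![3, -1, -1, -1; -1, 2, -1, 0; -1, -1, 2, 0; -1, 0, 0, 1] := by
    ext i j
    rw [lapMatrix_apply, degree_G0_four_one]
    fin_cases i <;> fin_cases j <;> simp +decide
  let Γ : Matrix (Fin 4) (Fin 4) ℝ :=
    !![0, 0, 0, 0; 0, 2/3, 1/3, 0; 0, 1/3, 2/3, 0; 0, 0, 0, 1]
  have hΓ (v : Fin 4) : IsUnitPotential (G0 4 1) 0 v (Γ.col v) := by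
    rw [IsUnitPotential, hL]
    ext w
    fin_cases v <;> fin_cases w <;> simp [Γ, mulVec, dotProduct, Fin.sum_univ_four] <;> norm_num
  rw [effRes_eq_of_forall_isUnitPotential (connected_G0 4 1) hΓ]
  fin_cases u <;> fin_cases v <;> simp [Γ] <;> norm_num

theorem degRes_cycleGraph_four : degRes (SimpleGraph.cycleGraph 4) = 20 := by
  rw [degRes_eq_sum_degree_mul_Kfv (G := .cycleGraph 4) SimpleGraph.cycleGraph_connected]
  simp only [SimpleGraph.cycleGraph_degree_three_le, Kfv_eq_sum, effRes_cycleGraph_four,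
    Fin.sum_univ_four, of_apply, cons_val', Matrix.cons_val]
  norm_num

theorem Kfv_cycleGraph_four : Kfv (SimpleGraph.cycleGraph 4) 0 = 5 / 2 := by
  simp only [Kfv_eq_sum, effRes_cycleGraph_four, Fin.sum_univ_four, of_apply, cons_val',
    Matrix.cons_val]
  norm_num

theorem Dv_cycleGraph_four : Dv (SimpleGraph.cycleGraph 4) 0 = 5 := by
  simp only [Dv_eq_sum, SimpleGraph.cycleGraph_degree_three_le, effRes_cycleGraph_four,
    Fin.sum_univ_four, of_apply, cons_val', Matrix.cons_val]
  norm_num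

theorem ncard_edgeSet_cycleGraph_four : (SimpleGraph.cycleGraph 4).edgeSet.ncard = 4 := by
  rw [← SimpleGraph.coe_edgeFinset, Set.ncard_coe_finset]
  decide

theorem degRes_G0_four_one : degRes (G0 4 1) = 70 / 3 := by
  simp only [degRes_eq_sum_degree_mul_Kfv (connected_G0 4 1), degree_G0_four_one, Kfv_eq_sum,
    effRes_G0_four_one, Fin.sum_univ_four, of_apply, cons_val', Matrix.cons_val]
  norm_num

theorem Kfv_G0_four_one : Kfv (G0 4 1) 0 = 7 / 3 := by
  simp only [Kfv_eq_sum, effRes_G0_four_one, Fin.sum_univ_four, of_apply, cons_val',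
    Matrix.cons_val]
  norm_num

theorem Dv_G0_four_one : Dv (G0 4 1) 0 = 11 / 3 := by
  simp only [Dv_eq_sum, degree_G0_four_one, effRes_G0_four_one, Fin.sum_univ_four, of_apply,
    cons_val', Matrix.cons_val]
  norm_num

theorem ncard_edgeSet_G0_four_one : (G0 4 1).edgeSet.ncard = 4 := by
  rw [← SimpleGraph.coe_edgeFinset, Set.ncard_coe_finset]
  decide

end FourVertices

section Replacement

variable {V V' W : Type*} [Finite V] {H : SimpleGraph W} {r : W}
  {G : SimpleGraph V} {f : W ↪ V} {g : Fin 4 ↪ V}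
  {G' : SimpleGraph V'} {f' : W ↪ V'} {g' : Fin 4 ↪ V'}

theorem ncard_edgeSet_eq_of_isOnePointUnion [Finite V']
    (h : IsOnePointUnion H r (SimpleGraph.cycleGraph 4) 0 G f g)
    (h' : IsOnePointUnion H r (G0 4 1) 0 G' f' g') :
    G.edgeSet.ncard = G'.edgeSet.ncard := by
  rw [h.ncard_edgeSet, h'.ncard_edgeSet, ncard_edgeSet_cycleGraph_four, ncard_edgeSet_G0_four_one]

theorem degRes_sub_degRes_of_isOnePointUnion [Fintype V'] (hH : H.Connected)
    (h : IsOnePointUnion H r (SimpleGraph.cycleGraph 4) 0 G f g)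
    (h' : IsOnePointUnion H r (G0 4 1) 0 G' f' g') :
    degRes G - degRes G' = (4 * Fintype.card V' + G'.edgeSet.ncard) / 3 - 10 := by
  have : Finite W := .of_injective f f.injective
  cases nonempty_fintype W
  have hcard : (Fintype.card V' : ℝ) + 1 = Fintype.card W + 4 := mod_cast h'.card_add_one
  rw [h.degRes_eq hH SimpleGraph.cycleGraph_connected, h'.degRes_eq hH (connected_G0 4 1),
    h'.ncard_edgeSet, eq_sub_of_add_eq hcard, ncard_edgeSet_cycleGraph_four,
    ncard_edgeSet_G0_four_one, degRes_cycleGraph_four, degRes_G0_four_one, Kfv_cycleGraph_four,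
    Kfv_G0_four_one, Dv_cycleGraph_four, Dv_G0_four_one, Fintype.card_fin]
  push_cast
  ring

end Replacement

section Cacti

variable {n a b t : ℕ}

/-- The increasing embedding of `Fin n` into `Fin (n + 3)` that makes room for the labels `a`,
`a + 1` and `b + 2` (when `a ≤ b ≤ n`). -/
def gap (n a b : ℕ) : Fin n ↪ Fin (n + 3) where
  toFun k := ⟨if k.val < a then k else if k.val < b then k + 2 else k + 3, by split_ifs <;> omega⟩
  inj' k l hkl := by grind

theorem val_gap (k : Fin n) :
    (gap n a b k).val = if k.val < a then k.val else if k.val < b then k.val + 2 else k.val + 3 :=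
  rfl

/-- The embedding of a rooted graph on four vertices whose nonroot vertices `1`, `2`, `3` receive
the labels that `gap` leaves free. -/
def block (ha : 1 ≤ a) (hab : a ≤ b) (hbn : b ≤ n) : Fin 4 ↪ Fin (n + 3) where
  toFun i := ⟨if i = 0 then 0 else if i = 1 then a else if i = 2 then a + 1 else b + 2,
    by split_ifs <;> omega⟩
  inj' i j hij := by grind

theorem val_block (ha : 1 ≤ a) (hab : a ≤ b) (hbn : b ≤ n) (i : Fin 4) :
    (block ha hab hbn i).val =
      if i = 0 then 0 else if i = 1 then a else if i = 2 then a + 1 else b + 2 :=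
  rfl

theorem isOnePointUnion_gap_block [NeZero n] (ha : 1 ≤ a) (hab : a ≤ b) (hbn : b ≤ n)
    {H : SimpleGraph (Fin n)} {K : SimpleGraph (Fin 4)} {G : SimpleGraph (Fin (n + 3))}
    (hH : ∀ k l, G.Adj (gap n a b k) (gap n a b l) ↔ H.Adj k l)
    (hK : ∀ i j, G.Adj (block ha hab hbn i) (block ha hab hbn j) ↔ K.Adj i j)
    (hHK : ∀ k i, G.Adj (gap n a b k) (block ha hab hbn i) → k = 0 ∨ i = 0) :
    IsOnePointUnion H 0 K 0 G (gap n a b) (block ha hab hbn) where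
  adj_left := hH
  adj_right := hK
  eq_or_eq_of_adj := hHK
  apply_eq_apply k i := by
    rw [Fin.ext_iff, Fin.ext_iff, val_gap, val_block, Fin.val_zero]
    grind
  exists_apply_eq v := by
    simp only [Fin.ext_iff, val_gap, val_block]
    obtain hv | hv | hv | hv | hv | hv : v.val < a ∨ v.val = a ∨ v.val = a + 1 ∨
        a + 2 ≤ v.val ∧ v.val < b + 2 ∨ v.val = b + 2 ∨ b + 3 ≤ v.val := by omega
    · exact .inl ⟨⟨v, by omega⟩, by grind⟩
    · exact .inr ⟨1, hv.symm⟩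
    · exact .inr ⟨2, hv.symm⟩
    · exact .inl ⟨⟨v - 2, by omega⟩, by grind⟩
    · exact .inr ⟨3, hv.symm⟩
    · exact .inl ⟨⟨v - 3, by omega⟩, by grind⟩

theorem isOnePointUnion_G0 [NeZero n] (h : 2 * t + 1 ≤ n) :
    IsOnePointUnion (G0 n t) 0 (G0 4 1) 0 (G0 (n + 3) (t + 1))
      (gap n (2 * t + 1) (2 * t + 1)) (block (by omega) le_rfl h) := by
  refine isOnePointUnion_gap_block _ _ _ (fun k l ↦ ?_) (fun i j ↦ ?_) (fun k i ↦ ?_) <;>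
    simp only [G0, SimpleGraph.fromRel_adj, Fin.ext_iff, val_gap, val_block, ne_eq] <;>
    grind

theorem isOnePointUnion_G5g_cycleGraph [NeZero n] (h : 2 * t + 1 ≤ n) :
    IsOnePointUnion (G0 n t) 0 (SimpleGraph.cycleGraph 4) 0 (G5g (n + 3) (t + 1))
      (gap n (2 * t + 1) (2 * t + 1)) (block (by omega) le_rfl h) := by
  refine isOnePointUnion_gap_block _ _ _ (fun k l ↦ ?_) (fun i j ↦ ?_) (fun k i ↦ ?_) <;>
    simp only [G0, G5g, SimpleGraph.fromRel_adj, SimpleGraph.cycleGraph_adj, Fin.ext_iff, val_gap,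
      val_block, ne_eq]
  case refine_2 => fin_cases i <;> fin_cases j <;> grind
  all_goals grind

theorem isOnePointUnion_G5g_G0 [NeZero n] (ht : 1 ≤ t) (h : 2 * t + 2 ≤ n) :
    IsOnePointUnion (G5g n t) 0 (G0 4 1) 0 (G5g (n + 3) (t + 1))
      (gap n 1 (2 * t + 2)) (block le_rfl (by omega) h) := by
  refine isOnePointUnion_gap_block _ _ _ (fun k l ↦ ?_) (fun i j ↦ ?_) (fun k i ↦ ?_) <;>
    simp only [G0, G5g, SimpleGraph.fromRel_adj, Fin.ext_iff, val_gap, val_block, ne_eq]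
  case refine_1 => grind (splits := 15)
  case refine_2 => fin_cases i <;> fin_cases j <;> simp <;> grind
  case refine_3 => grind

theorem isOnePointUnion_G8g_cycleGraph [NeZero n] (ht : 1 ≤ t) (h : 2 * t + 2 ≤ n) :
    IsOnePointUnion (G5g n t) 0 (SimpleGraph.cycleGraph 4) 0 (G8g (n + 3) (t + 1))
      (gap n (2 * t + 2) (2 * t + 2)) (block (by omega) le_rfl h) := by
  refine isOnePointUnion_gap_block _ _ _ (fun k l ↦ ?_) (fun i j ↦ ?_) (fun k i ↦ ?_) <;>
    simp only [G5g, G8g, SimpleGraph.fromRel_adj, SimpleGraph.cycleGraph_adj, Fin.ext_iff, val_gap,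
      val_block, ne_eq]
  case refine_2 => fin_cases i <;> fin_cases j <;> simp <;> grind
  all_goals grind (splits := 15)

theorem G0_zero [NeZero n] : G0 n 0 = SimpleGraph.starGraph 0 := by
  ext k l
  simp only [G0, SimpleGraph.fromRel_adj, SimpleGraph.starGraph_adj, Fin.ext_iff, Fin.val_zero]
  grind

theorem G0_add_one (h : 2 * t + 3 ≤ n) :
    G0 n (t + 1) =
      G0 n t ⊔ SimpleGraph.edge ⟨2 * t + 1, by omega⟩ ⟨2 * t + 2, by omega⟩ := by
  ext k l
  simp only [G0, SimpleGraph.sup_adj, SimpleGraph.fromRel_adj, SimpleGraph.edge_adj, Fin.ext_iff]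
  grind

theorem ncard_edgeSet_G0 (h : 2 * t + 1 ≤ n) : (G0 n t).edgeSet.ncard + 1 = n + t := by
  have : NeZero n := ⟨by omega⟩
  induction t with
  | zero =>
    rw [G0_zero, ← SimpleGraph.coe_edgeFinset, Set.ncard_coe_finset,
      (SimpleGraph.isTree_starGraph _).card_edgeFinset, Fintype.card_fin, Nat.add_zero]
  | succ t ih =>
    have hnadj : ¬(G0 n t).Adj ⟨2 * t + 1, by omega⟩ ⟨2 * t + 2, by omega⟩ := by
      simp only [adj_G0]
      grind
    have hih := ih (by omega)
    rw [← SimpleGraph.coe_edgeFinset, Set.ncard_coe_finset] at hih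
    rw [G0_add_one h, ← SimpleGraph.coe_edgeFinset, Set.ncard_coe_finset,
      SimpleGraph.card_edgeFinset_sup_edge _ hnadj (by simp)]
    omega

theorem connected_G5g (ht : 1 ≤ t) (h : 2 * t + 2 ≤ n) : (G5g n t).Connected := by
  obtain ⟨t, rfl⟩ := Nat.exists_eq_add_of_le' ht
  obtain ⟨n, rfl⟩ := Nat.exists_eq_add_of_le' (show 3 ≤ n by omega)
  have : NeZero n := ⟨by omega⟩
  exact (isOnePointUnion_G5g_cycleGraph (by omega)).connected (connected_G0 n t)
    SimpleGraph.cycleGraph_connected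

theorem ncard_edgeSet_G5g (ht : 1 ≤ t) (h : 2 * t + 2 ≤ n) :
    (G5g n t).edgeSet.ncard + 1 = n + t := by
  rw [← ncard_edgeSet_G0 (by omega : 2 * t + 1 ≤ n)]
  obtain ⟨t, rfl⟩ := Nat.exists_eq_add_of_le' ht
  obtain ⟨n, rfl⟩ := Nat.exists_eq_add_of_le' (show 3 ≤ n by omega)
  have : NeZero n := ⟨by omega⟩
  rw [ncard_edgeSet_eq_of_isOnePointUnion (isOnePointUnion_G5g_cycleGraph (by omega))
    (isOnePointUnion_G0 (by omega))]

theorem degRes_G5g_sub_degRes_G0 (ht : 1 ≤ t) (h : 2 * t + 2 ≤ n) :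
    degRes (G5g n t) - degRes (G0 n t) = (5 * n + t - 31) / 3 := by
  have hcard : ((G0 n t).edgeSet.ncard + 1 : ℝ) = n + t := by
    exact_mod_cast ncard_edgeSet_G0 (by omega)
  obtain ⟨t, rfl⟩ := Nat.exists_eq_add_of_le' ht
  obtain ⟨n, rfl⟩ := Nat.exists_eq_add_of_le' (show 3 ≤ n by omega)
  have : NeZero n := ⟨by omega⟩
  rw [degRes_sub_degRes_of_isOnePointUnion (connected_G0 n t)
    (isOnePointUnion_G5g_cycleGraph (by omega)) (isOnePointUnion_G0 (by omega)), Fintype.card_fin]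
  linarith

theorem degRes_G8g_sub_degRes_G5g (ht : 2 ≤ t) (h : 2 * t + 3 ≤ n) :
    degRes (G8g n t) - degRes (G5g n t) = (5 * n + t - 31) / 3 := by
  have hcard : ((G5g n t).edgeSet.ncard + 1 : ℝ) = n + t := by
    exact_mod_cast ncard_edgeSet_G5g (by omega) (by omega)
  obtain ⟨t, rfl⟩ := Nat.exists_eq_add_of_le' (show 1 ≤ t by omega)
  obtain ⟨n, rfl⟩ := Nat.exists_eq_add_of_le' (show 3 ≤ n by omega)
  have : NeZero n := ⟨by omega⟩
  rw [degRes_sub_degRes_of_isOnePointUnion (connected_G5g (by omega) (by omega))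
    (isOnePointUnion_G8g_cycleGraph (by omega) (by omega))
    (isOnePointUnion_G5g_G0 (by omega) (by omega)), Fintype.card_fin]
  linarith

end Cacti

/-- `D_R(G8) - D_R(G⁰(n,t)) = (10/3)n + (2/3)t - 62/3`. -/
theorem stmt_15 (n t : ℕ) (h1 : 2 * t + 3 ≤ n) (ht : 2 ≤ t) :
    degRes (G8g n t) - degRes (G0 n t) = (10 / 3) * (n : ℝ) + (2 / 3) * t - 62 / 3 := by
  have hG8 := degRes_G8g_sub_degRes_G5g ht h1
  have hG5 := degRes_G5g_sub_degRes_G0 (by omega : 1 ≤ t) (by omega : 2 * t + 2 ≤ n)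
  linarith
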